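/- (General Clifford correspondence) Let k be an algebraically closed field, A and B finite-dimensional semisimple k-algebras with B normal in A, V a finite-dimensional simple B-module, and E = End_A(V↑^A)^op. There is a one-to-one correspondence between isomorphism classes of finite-dimensional simple left E-modules and isomorphism classes of finite-dimensional simple A-modules containing a copy of V on restriction to B, induced by U ↦ V↑^A ⊗_E U with inverse induced by N ↦ Hom_A(V↑^A, N). -/

import Mathlib

/-!
Write `M = V↑^A` and `E = End_A(M)ᵐᵒᵖ`. Since `V` is cyclic over `B`, `M` is cyclic over `A`, and
it is projective because `A` is semisimple. The correspondence is then an instance of Morita theory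
for a finitely generated projective module over a semisimple ring.

* `psiMap_bijective`: a dual basis `(aᵢ, xᵢ)` of `M` shows that `ψ : U → Hom_A(M, M ⊗_E U)` is
  bijective for every `E`-module `U`. The endomorphisms `m' ↦ aᵢ(m') m` turn
  `h(m) = ∑ aᵢ(m) h(xᵢ)` into a tensor `m ⊗ u`, and the maps `m ⊗ u ↦ (m' ↦ aᵢ(m') m) • u` recover
  `u` from the tensors `xᵢ ⊗ u`.
* `isSimpleModule_balT`: if `U` is simple and `M ⊗_E U = X ⊕ Y`, then `Hom_A(M, X)` is an
  `E`-submodule of `Hom_A(M, M ⊗_E U) ≅ U`, so `X` or `Y` vanishes.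
* `isSimpleModule_hom`: if `N` is simple, projectivity of `M` makes every nonzero `f : M → N`
  generate `Hom_A(M, N)` over `E`.
* `phiMap_bijective`: a section `s` of a surjection `f : M → N` gives the inverse `n ↦ s(n) ⊗ f`
  of `φ`.

The condition that `N` contains `V` corresponds to `Hom_A(M, N) ≠ 0` by Frobenius reciprocity
(`Ind.exists_lift`) and simplicity of `V`.
-/

open TensorProduct Pointwise MulOpposite

set_option synthInstance.maxHeartbeats 1000000
set_option maxHeartbeats 2000000

noncomputable section

/-- The left module structure of `E = End_A(M)ᵐᵒᵖ` on `Hom_A(M,N)`, given by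
precomposition: `e • f = f ∘ e.unop`. -/
instance endOpModuleHom (A M N : Type*) [Ring A] [AddCommGroup M] [Module A M]
    [AddCommGroup N] [Module A N] : Module (Module.End A M)ᵐᵒᵖ (M →ₗ[A] N) where
  smul e f := f ∘ₗ e.unop
  one_smul f := rfl
  mul_smul e₁ e₂ f := rfl
  smul_zero e := rfl
  smul_add e f g := rfl
  add_smul e₁ e₂ f := by ext m; simp [HSMul.hSMul, SMul.smul]
  zero_smul f := by ext m; simp [HSMul.hSMul, SMul.smul]

theorem endOp_smul_hom_apply {A M N : Type*} [Ring A] [AddCommGroup M] [Module A M]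
    [AddCommGroup N] [Module A N] (e : (Module.End A M)ᵐᵒᵖ) (f : M →ₗ[A] N) (m : M) :
    (e • f) m = f (e.unop m) := rfl

section Bal

variable (S : Type*) [Ring S] (Amb : Type*) [Ring Amb]
variable (M U : Type*) [AddCommGroup M] [AddCommGroup U]
variable [Module S M] [Module Amb M] [Module Sᵐᵒᵖ U]

/-- The relations defining the balanced tensor product `M ⊗_{Sᵐᵒᵖ} U` of the
right `Sᵐᵒᵖ`-module `M` (i.e. left `S`-module) with the left `Sᵐᵒᵖ`-module `U`:
the elements `(m·s) ⊗ u - m ⊗ (s·u)`.  The ambient ring `Amb` acts on `M`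
commuting with `S`, so the span over `Amb` coincides with the span over `ℤ`. -/
def balRel : Submodule Amb (M ⊗[ℤ] U) :=
  Submodule.span Amb
    {x | ∃ (s : S) (m : M) (u : U),
      x = (s • m) ⊗ₜ[ℤ] u - m ⊗ₜ[ℤ] ((MulOpposite.op s) • u)}

/-- The balanced tensor product `M ⊗_{Sᵐᵒᵖ} U`, as an `Amb`-module. -/
def BalT := (M ⊗[ℤ] U) ⧸ balRel S Amb M U

instance : AddCommGroup (BalT S Amb M U) :=
  inferInstanceAs (AddCommGroup ((M ⊗[ℤ] U) ⧸ balRel S Amb M U))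

instance : Module Amb (BalT S Amb M U) :=
  inferInstanceAs (Module Amb ((M ⊗[ℤ] U) ⧸ balRel S Amb M U))

instance (R : Type*) [Semiring R] [SMul R Amb] [Module R (M ⊗[ℤ] U)]
    [IsScalarTower R Amb (M ⊗[ℤ] U)] : Module R (BalT S Amb M U) :=
  inferInstanceAs (Module R ((M ⊗[ℤ] U) ⧸ balRel S Amb M U))

instance (R : Type*) [Semiring R] [SMul R Amb] [Module R (M ⊗[ℤ] U)]
    [IsScalarTower R Amb (M ⊗[ℤ] U)] : IsScalarTower R Amb (BalT S Amb M U) :=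
  inferInstanceAs (IsScalarTower R Amb ((M ⊗[ℤ] U) ⧸ balRel S Amb M U))

/-- The class of `m ⊗ u` in the balanced tensor product. -/
def BalT.mk (m : M) (u : U) : BalT S Amb M U :=
  Submodule.Quotient.mk (m ⊗ₜ[ℤ] u)

end Bal

section PhiPsi

variable (A M : Type*) [Ring A] [AddCommGroup M] [Module A M]

/-- Evaluation `m ↦ (f ↦ f m)`, as an `A`-linear map into `ℤ`-linear maps. -/
def evMap (N : Type*) [AddCommGroup N] [Module A N] :
    M →ₗ[A] ((M →ₗ[A] N) →ₗ[ℤ] N) where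
  toFun m :=
    { toFun := fun f => f m
      map_add' := fun _ _ => rfl
      map_smul' := fun _ _ => rfl }
  map_add' m₁ m₂ := by ext f; exact f.map_add _ _
  map_smul' a m := by ext f; exact f.map_smul a m

/-- The canonical `A`-linear map `φ : M ⊗_E Hom_A(M,N) → N`, `φ(m ⊗ f) = f m`,
where `E = End_A(M)ᵐᵒᵖ`.  `N` is static with respect to `M` iff `φ` is an
isomorphism, i.e. iff `φ` is bijective. -/
def phiMap (N : Type*) [AddCommGroup N] [Module A N] :
    BalT (Module.End A M) A M (M →ₗ[A] N) →ₗ[A] N :=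
  Submodule.liftQ _ (TensorProduct.AlgebraTensorModule.lift (evMap A M N)) (by
    rw [balRel, Submodule.span_le]
    rintro x ⟨s, m, f, rfl⟩
    simp only [SetLike.mem_coe, LinearMap.mem_ker, map_sub]
    have h1 : (TensorProduct.AlgebraTensorModule.lift (evMap A M N)) ((s • m) ⊗ₜ[ℤ] f)
        = f (s • m) := rfl
    have h2 : (TensorProduct.AlgebraTensorModule.lift (evMap A M N))
        (m ⊗ₜ[ℤ] ((MulOpposite.op s) • f)) = f (s m) := rfl
    rw [h1, h2]
    exact sub_self _)

theorem phiMap_mk (N : Type*) [AddCommGroup N] [Module A N] (m : M) (f : M →ₗ[A] N) :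
    phiMap A M N (BalT.mk _ _ _ _ m f) = f m := rfl

/-- `m ↦ m ⊗ u`, as an `A`-linear map `M → M ⊗[ℤ] U`. -/
def tmulRight (U : Type*) [AddCommGroup U] (u : U) : M →ₗ[A] (M ⊗[ℤ] U) where
  toFun m := m ⊗ₜ[ℤ] u
  map_add' _ _ := TensorProduct.add_tmul _ _ _
  map_smul' a m := (TensorProduct.smul_tmul' a m u).symm

/-- The canonical map `ψ : U → Hom_A(M, M ⊗_E U)`, `ψ(u)(m) = m ⊗ u`, for a left
`E`-module `U`, where `E = End_A(M)ᵐᵒᵖ`.  `U` is static with respect to `M` iff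
`ψ` is an isomorphism of `E`-modules. -/
def psiMap (U : Type*) [AddCommGroup U] [Module (Module.End A M)ᵐᵒᵖ U] :
    U → (M →ₗ[A] BalT (Module.End A M) A M U) := fun u =>
  (balRel (Module.End A M) A M U).mkQ ∘ₗ tmulRight A M U u

end PhiPsi

section Ind

variable {Bc Sc : Type*} [Ring Bc] [Ring Sc] (f : Bc →+* Sc)
variable (V : Type*) [AddCommGroup V] [Module Bc V]

/-- The relations defining the induced module `V↑ = Sc ⊗_{Bc} V` along the ring
homomorphism `f : Bc →+* Sc`: the elements `(s·f(b)) ⊗ v - s ⊗ (b·v)`. -/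
def indRel : Submodule Sc (Sc ⊗[ℤ] V) :=
  Submodule.span Sc
    {x | ∃ (s : Sc) (b : Bc) (v : V), x = (s * f b) ⊗ₜ[ℤ] v - s ⊗ₜ[ℤ] (b • v)}

/-- The induced module `V↑ = Sc ⊗_{Bc} V` along `f : Bc →+* Sc`, with the ring
`Sc` acting by multiplication on the first factor. -/
def Ind := (Sc ⊗[ℤ] V) ⧸ indRel f V

instance : AddCommGroup (Ind f V) :=
  inferInstanceAs (AddCommGroup ((Sc ⊗[ℤ] V) ⧸ indRel f V))

instance : Module Sc (Ind f V) :=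
  inferInstanceAs (Module Sc ((Sc ⊗[ℤ] V) ⧸ indRel f V))

instance (R : Type*) [Semiring R] [SMul R Sc] [Module R (Sc ⊗[ℤ] V)]
    [IsScalarTower R Sc (Sc ⊗[ℤ] V)] : Module R (Ind f V) :=
  inferInstanceAs (Module R ((Sc ⊗[ℤ] V) ⧸ indRel f V))

instance (R : Type*) [Semiring R] [SMul R Sc] [Module R (Sc ⊗[ℤ] V)]
    [IsScalarTower R Sc (Sc ⊗[ℤ] V)] : IsScalarTower R Sc (Ind f V) :=
  inferInstanceAs (IsScalarTower R Sc ((Sc ⊗[ℤ] V) ⧸ indRel f V))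

/-- The class of `s ⊗ v` in the induced module. -/
def Ind.mk (s : Sc) (v : V) : Ind f V := Submodule.Quotient.mk (s ⊗ₜ[ℤ] v)

/-- The canonical map `V → V↑`, `v ↦ 1 ⊗ v`. -/
def Ind.of (v : V) : Ind f V := Ind.mk f V 1 v

end Ind

section Clifford

/-! ### Morita theory of `M ⊗_E -` and `Hom_A(M, -)` -/

section Morita

variable {A M : Type*} [Ring A] [AddCommGroup M] [Module A M]

/-- The rank-one endomorphism `m' ↦ a(m') • m` attached to a functional `a : M → A` and a
vector `m`, regarded as an element of `End_A(M)ᵐᵒᵖ`. -/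
def rankOne (a : M →ₗ[A] A) (m : M) : (Module.End A M)ᵐᵒᵖ :=
  op (a.smulRight m)

/-- For a functional `a` on `M`, the additive map `M ⊗_ℤ U → U`, `m ⊗ u ↦ rankOne a m • u`. -/
def rankOneAct (U : Type*) [AddCommGroup U] [Module (Module.End A M)ᵐᵒᵖ U]
    (a : M →ₗ[A] A) : M ⊗[ℤ] U →+ U :=
  (TensorProduct.lift
    (AddMonoidHom.toIntLinearMap
      { toFun := fun m => (DistribSMul.toAddMonoidHom U (rankOne a m)).toIntLinearMap
        map_zero' := by
          ext u
          have h : rankOne a (0 : M) = 0 := by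
            rw [rankOne, LinearMap.smulRight_zero]; rfl
          simp [h]
        map_add' := fun m₁ m₂ => by
          ext u
          have h : rankOne a (m₁ + m₂) = rankOne a m₁ + rankOne a m₂ := by
            apply unop_injective
            ext m
            simp [rankOne]
          simp [h, add_smul] })).toAddMonoidHom

theorem rankOneAct_tmul {U : Type*} [AddCommGroup U] [Module (Module.End A M)ᵐᵒᵖ U]
    (a : M →ₗ[A] A) (m : M) (u : U) :
    rankOneAct U a (m ⊗ₜ[ℤ] u) = rankOne a m • u := rfl

/-- The maps `rankOneAct U a` descend to the balanced tensor product. The relation module is an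
`A`-span, so the vanishing is proved for all functionals `a` at once: acting by `r : A` on the
tensor amounts to replacing `a` by `a(·) * r`. -/
theorem rankOneAct_eq_zero {U : Type*} [AddCommGroup U] [Module (Module.End A M)ᵐᵒᵖ U]
    {x : M ⊗[ℤ] U} (hx : x ∈ balRel (Module.End A M) A M U) (a : M →ₗ[A] A) :
    rankOneAct U a x = 0 := by
  rw [balRel] at hx
  induction hx using Submodule.span_induction generalizing a with
  | mem x h =>
    obtain ⟨s, m, u, rfl⟩ := h
    rw [map_sub, rankOneAct_tmul, rankOneAct_tmul, smul_smul, sub_eq_zero]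
    congr 1
    apply unop_injective
    ext m'
    simp [rankOne]
  | zero => exact map_zero _
  | add x y _ _ hx hy => rw [map_add, hx, hy, add_zero]
  | smul r x hmem hx =>
    rw [← hx ((LinearMap.toSpanSingleton A A r) ∘ₗ a)]
    clear hx hmem
    induction x using TensorProduct.induction_on with
    | zero => simp
    | add x y hx hy => rw [smul_add, map_add, map_add, hx, hy]
    | tmul m u =>
      rw [TensorProduct.smul_tmul', rankOneAct_tmul, rankOneAct_tmul]
      congr 1
      apply unop_injective
      ext m'
      simp [rankOne, mul_smul]

theorem BalT.induction {U : Type*} [AddCommGroup U] [Module (Module.End A M)ᵐᵒᵖ U]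
    {p : BalT (Module.End A M) A M U → Prop} (x : BalT (Module.End A M) A M U)
    (zero : p 0) (mk : ∀ m u, p (BalT.mk _ _ _ _ m u))
    (add : ∀ x y, p x → p y → p (x + y)) : p x := by
  obtain ⟨t, rfl⟩ := Submodule.mkQ_surjective (balRel (Module.End A M) A M U) x
  induction t using TensorProduct.induction_on with
  | zero => rw [map_zero]; exact zero
  | tmul m u => exact mk m u
  | add x y hx hy => rw [map_add]; exact add _ _ hx hy

theorem psiMap_apply {U : Type*} [AddCommGroup U] [Module (Module.End A M)ᵐᵒᵖ U] (u : U) (m : M) :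
    psiMap A M U u m = BalT.mk _ _ _ _ m u := rfl

theorem BalT.mk_smul {U : Type*} [AddCommGroup U] [Module (Module.End A M)ᵐᵒᵖ U]
    (e : (Module.End A M)ᵐᵒᵖ) (m : M) (u : U) :
    BalT.mk (Module.End A M) A M U m (e • u) = BalT.mk _ _ _ _ (e.unop m) u := by
  exact ((Submodule.Quotient.eq (balRel (Module.End A M) A M U)).2
    (Submodule.subset_span ⟨e.unop, m, u, rfl⟩)).symm

/-- The unit `ψ` as an `E`-linear map. -/
def psiLin (A M U : Type*) [Ring A] [AddCommGroup M] [Module A M] [AddCommGroup U]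
    [Module (Module.End A M)ᵐᵒᵖ U] :
    U →ₗ[(Module.End A M)ᵐᵒᵖ] (M →ₗ[A] BalT (Module.End A M) A M U) where
  toFun := psiMap A M U
  map_add' u v := by
    ext m
    exact congrArg (balRel (Module.End A M) A M U).mkQ (TensorProduct.tmul_add m u v)
  map_smul' e u := by
    ext m
    exact BalT.mk_smul e m u

/-- A dual basis of a finitely generated projective module. -/
theorem exists_dual_basis (A M : Type*) [Ring A] [AddCommGroup M] [Module A M]
    [Module.Finite A M] [Module.Projective A M] :
    ∃ (n : ℕ) (a : Fin n → M →ₗ[A] A) (x : Fin n → M), ∀ m, ∑ i, a i m • x i = m := by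
  obtain ⟨n, f, g, -, -, hfg⟩ := Module.Finite.exists_comp_eq_id_of_projective A M
  refine ⟨n, fun i => LinearMap.proj i ∘ₗ g, fun i => f (Pi.single i 1), fun m => ?_⟩
  conv_rhs => rw [← LinearMap.id_apply (R := A) m, ← hfg, LinearMap.comp_apply,
    pi_eq_sum_univ' (g m)]
  simp [map_sum]

/-- For `M` finitely generated projective, `U → Hom_A(M, M ⊗_E U)` is bijective for every
`E`-module `U`. -/
theorem psiMap_bijective [Module.Finite A M] [Module.Projective A M]
    (U : Type*) [AddCommGroup U] [Module (Module.End A M)ᵐᵒᵖ U] :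
    Function.Bijective (psiMap A M U) := by
  obtain ⟨n, a, x, hax⟩ := exists_dual_basis A M
  constructor
  · change Function.Injective (psiLin A M U)
    rw [injective_iff_map_eq_zero]
    intro u hu
    have h0 : ∀ m : M, m ⊗ₜ[ℤ] u ∈ balRel (Module.End A M) A M U := fun m =>
      (Submodule.Quotient.mk_eq_zero _).1 (LinearMap.congr_fun hu m)
    have h1 : ∑ i, rankOne (a i) (x i) = 1 := by
      apply unop_injective
      ext m
      simpa [rankOne] using hax m
    rw [← one_smul (Module.End A M)ᵐᵒᵖ u, ← h1, Finset.sum_smul]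
    exact Finset.sum_eq_zero fun i _ => by
      rw [← rankOneAct_tmul, rankOneAct_eq_zero (h0 (x i))]
  · intro h
    have key : ∀ (b : M →ₗ[A] A) (y : BalT (Module.End A M) A M U),
        ∃ u, ∀ m, BalT.mk (Module.End A M) A M U m u = b m • y := by
      intro b y
      induction y using BalT.induction with
      | zero =>
        refine ⟨0, fun m => ?_⟩
        rw [smul_zero]
        exact LinearMap.congr_fun (map_zero (psiLin A M U)) m
      | mk m' u => exact ⟨rankOne b m' • u, fun m => by rw [BalT.mk_smul]; rfl⟩
      | add y z hy hz =>
        obtain ⟨u, hu⟩ := hy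
        obtain ⟨v, hv⟩ := hz
        refine ⟨u + v, fun m => ?_⟩
        rw [smul_add, ← hu, ← hv]
        exact LinearMap.congr_fun (map_add (psiLin A M U) u v) m
    choose u hu using fun i => key (a i) (h (x i))
    refine ⟨∑ i, u i, ?_⟩
    ext m
    change psiLin A M U (∑ i, u i) m = h m
    rw [map_sum, LinearMap.sum_apply]
    conv_rhs => rw [← hax m, map_sum]
    exact Finset.sum_congr rfl fun i _ => by rw [map_smul]; exact hu i m

/-- For `M` projective and `N` simple with `Hom_A(M, N) ≠ 0`, any `g : M → N` factors through any
nonzero (hence surjective) `f : M → N`, so `Hom_A(M, N)` is generated by each nonzero element. -/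
theorem isSimpleModule_hom [Module.Projective A M] (N : Type*) [AddCommGroup N] [Module A N]
    [IsSimpleModule A N] (h : ∃ f : M →ₗ[A] N, f ≠ 0) :
    IsSimpleModule (Module.End A M)ᵐᵒᵖ (M →ₗ[A] N) := by
  obtain ⟨f₀, hf₀⟩ := h
  refine isSimpleModule_iff_toSpanSingleton_surjective.2 ⟨⟨f₀, 0, hf₀⟩, fun f hf g => ?_⟩
  obtain ⟨e, he⟩ := Module.projective_lifting_property f g (LinearMap.surjective_of_ne_zero hf)
  exact ⟨op e, he⟩

theorem phiMap_bijective (N : Type*) [AddCommGroup N] [Module A N] [Module.Projective A N]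
    [IsSimpleModule A N] (h : ∃ f : M →ₗ[A] N, f ≠ 0) :
    Function.Bijective (phiMap A M N) := by
  obtain ⟨f, hf⟩ := h
  have hs := LinearMap.surjective_of_ne_zero hf
  obtain ⟨s, hs'⟩ := Module.projective_lifting_property f LinearMap.id hs
  constructor
  ·
    -- `n ↦ s n ⊗ f` is a left inverse of `φ`, since `g = f ∘ (s ∘ g)` for every `g : M → N`
    refine Function.LeftInverse.injective (g := fun n => psiMap A M (M →ₗ[A] N) f (s n)) ?_
    intro x
    induction x using BalT.induction with
    | zero => simp
    | add x y hx hy => simp only [map_add] at hx hy ⊢; rw [hx, hy]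
    | mk m g =>
      have hg : g = op (s ∘ₗ g) • f := by
        ext m
        exact (LinearMap.congr_fun hs' (g m)).symm
      rw [phiMap_mk]
      conv_rhs => rw [hg, BalT.mk_smul]
      rfl
  · intro n
    obtain ⟨m, rfl⟩ := hs n
    exact ⟨BalT.mk _ _ _ _ m f, rfl⟩

/-- If `X ⊕ Y = M ⊗_E U` then `ψ` identifies `Hom_A(M, X)` with an `E`-submodule of `U`; it is `0`
or everything, and accordingly `Y` or `X` contains all generators `m ⊗ u`. -/
theorem isSimpleModule_balT [IsSemisimpleRing A] [Module.Finite A M]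
    (U : Type*) [AddCommGroup U] [Module (Module.End A M)ᵐᵒᵖ U]
    [IsSimpleModule (Module.End A M)ᵐᵒᵖ U] :
    IsSimpleModule A (BalT (Module.End A M) A M U) := by
  have : Module.Projective A M := Module.projective_of_isSemisimpleRing _ _
  have hψ := psiMap_bijective (A := A) (M := M) U
  have hU := IsSimpleModule.nontrivial (Module.End A M)ᵐᵒᵖ U
  have htop : ∀ X : Submodule A (BalT (Module.End A M) A M U),
      (∀ u m, psiMap A M U u m ∈ X) → X = ⊤ := by
    intro X hX
    refine eq_top_iff.2 fun x _ => ?_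
    induction x using BalT.induction with
    | zero => exact X.zero_mem
    | mk m u => exact hX u m
    | add x y hx hy => exact X.add_mem (hx trivial) (hy trivial)
  have hnt : Nontrivial (BalT (Module.End A M) A M U) := by
    obtain ⟨u, hu⟩ := exists_ne (0 : U)
    have : psiLin A M U u ≠ 0 := fun h0 => hu (hψ.1 (h0.trans (map_zero (psiLin A M U)).symm))
    obtain ⟨m, hm⟩ := DFunLike.ne_iff.1 this
    exact ⟨⟨_, _, hm⟩⟩
  refine { exists_pair_ne := exists_pair_ne _, eq_bot_or_eq_top := fun X => ?_ }
  obtain ⟨Y, hXY⟩ := exists_isCompl X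
  let W : Submodule (Module.End A M)ᵐᵒᵖ U :=
    { carrier := {u | ∀ m, psiLin A M U u m ∈ X}
      add_mem' := fun {u v} hu hv m => by
        rw [map_add]; exact X.add_mem (hu m) (hv m)
      zero_mem' := fun m => by rw [map_zero]; exact X.zero_mem
      smul_mem' := fun e u hu m => by
        rw [map_smul]; exact hu (e.unop m) }
  rcases eq_bot_or_eq_top W with hW | hW
  · left
    have hY : Y = ⊤ := htop Y fun u m => by
      -- the `X`-component of `ψ u` comes from an element of `W = 0`
      let p : BalT (Module.End A M) A M U →ₗ[A] BalT (Module.End A M) A M U :=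
        X.subtype ∘ₗ X.projectionOnto Y hXY
      obtain ⟨w, hw⟩ := hψ.2 (p ∘ₗ psiMap A M U u)
      have hwW : w ∈ W := fun m => by
        change psiMap A M U w m ∈ X
        rw [hw]
        exact (X.projectionOnto Y hXY _).2
      rw [hW, Submodule.mem_bot] at hwW
      have h0 : p (psiMap A M U u m) = 0 := by
        have := LinearMap.congr_fun hw m
        rw [LinearMap.comp_apply] at this
        rw [← this, hwW]
        exact LinearMap.congr_fun (map_zero (psiLin A M U)) m
      have h1 : X.projectionOnto Y hXY (psiMap A M U u m) = 0 := Subtype.ext h0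
      exact (Submodule.projectionOnto_apply_eq_zero_iff hXY).1 h1
    rw [hY] at hXY
    exact eq_bot_of_isCompl_top hXY
  · right
    refine htop X fun u m => ?_
    have : u ∈ W := hW ▸ Submodule.mem_top
    exact this m

/-- An isomorphism `M ⊗_E U₁ ≃ M ⊗_E U₂` induces one on `Hom_A(M, -)`, and `ψ` identifies these
spaces with `U₁` and `U₂`. -/
theorem nonempty_equiv_of_balT [Module.Finite A M] [Module.Projective A M]
    (U₁ U₂ : Type*) [AddCommGroup U₁] [AddCommGroup U₂]
    [Module (Module.End A M)ᵐᵒᵖ U₁] [Module (Module.End A M)ᵐᵒᵖ U₂]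
    (i : BalT (Module.End A M) A M U₁ ≃ₗ[A] BalT (Module.End A M) A M U₂) :
    Nonempty (U₁ ≃ₗ[(Module.End A M)ᵐᵒᵖ] U₂) := by
  let e₁ := LinearEquiv.ofBijective (psiLin A M U₁) (psiMap_bijective U₁)
  let e₂ := LinearEquiv.ofBijective (psiLin A M U₂) (psiMap_bijective U₂)
  let c : (M →ₗ[A] BalT (Module.End A M) A M U₁) ≃ₗ[(Module.End A M)ᵐᵒᵖ]
      (M →ₗ[A] BalT (Module.End A M) A M U₂) :=
    { toFun := fun f => i.toLinearMap ∘ₗ f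
      invFun := fun f => i.symm.toLinearMap ∘ₗ f
      map_add' := fun f g => LinearMap.comp_add _ _ _
      map_smul' := fun e f => rfl
      left_inv := fun f => by ext; simp
      right_inv := fun f => by ext; simp }
  exact ⟨(e₁.trans c).trans e₂.symm⟩

end Morita

/-! ### Induced modules and Frobenius reciprocity -/

section Induction

variable {R S : Type*} [Ring R] [Ring S] (f : R →+* S) (V : Type*) [AddCommGroup V] [Module R V]

theorem Ind.mk_mul (s : S) (b : R) (v : V) : Ind.mk f V (s * f b) v = Ind.mk f V s (b • v) :=
  (Submodule.Quotient.eq _).2 (Submodule.subset_span ⟨s, b, v, rfl⟩)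

theorem Ind.smul_of (s : S) (v : V) : s • Ind.of f V v = Ind.mk f V s v := by
  change Submodule.Quotient.mk (s • ((1 : S) ⊗ₜ[ℤ] v)) = _
  rw [TensorProduct.smul_tmul', smul_eq_mul, mul_one]
  rfl

theorem Ind.of_add (v w : V) : Ind.of f V (v + w) = Ind.of f V v + Ind.of f V w :=
  congrArg (indRel f V).mkQ (TensorProduct.tmul_add 1 v w)

theorem Ind.of_smul (b : R) (v : V) : Ind.of f V (b • v) = f b • Ind.of f V v := by
  rw [Ind.smul_of, Ind.of, ← Ind.mk_mul, one_mul]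

theorem Ind.span_range_of : Submodule.span S (Set.range (Ind.of f V)) = ⊤ := by
  refine eq_top_iff.2 fun x _ => ?_
  obtain ⟨t, rfl⟩ := Submodule.mkQ_surjective (indRel f V) x
  induction t using TensorProduct.induction_on with
  | zero => rw [map_zero]; exact zero_mem _
  | tmul s v =>
    change Ind.mk f V s v ∈ _
    rw [← Ind.smul_of]
    exact Submodule.smul_mem _ _ (Submodule.subset_span ⟨v, rfl⟩)
  | add x y hx hy => rw [map_add]; exact add_mem (hx trivial) (hy trivial)

theorem Ind.finite_of_isSimpleModule [IsSimpleModule R V] : Module.Finite S (Ind f V) := by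
  have := IsSimpleModule.nontrivial R V
  obtain ⟨v₀, hv₀⟩ := exists_ne (0 : V)
  refine ⟨⟨{Ind.of f V v₀}, ?_⟩⟩
  rw [eq_top_iff, ← Ind.span_range_of, Submodule.span_le]
  rintro _ ⟨v, rfl⟩
  obtain ⟨b, rfl⟩ := IsSimpleModule.toSpanSingleton_surjective R hv₀ v
  rw [LinearMap.toSpanSingleton_apply, Ind.of_smul]
  exact Submodule.smul_mem _ _ (Submodule.subset_span (by simp))

/-- Frobenius reciprocity: a `B`-linear map `V → N` extends to an `A`-linear map `V↑ → N`. -/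
theorem Ind.exists_lift {N : Type*} [AddCommGroup N] [Module S N] (g : V →+ N)
    (hg : ∀ (b : R) v, g (b • v) = f b • g v) :
    ∃ h : Ind f V →ₗ[S] N, ∀ v, h (Ind.of f V v) = g v := by
  let g' : S →ₗ[S] V →ₗ[ℤ] N :=
    { toFun := fun s => ((DistribSMul.toAddMonoidHom N s).comp g).toIntLinearMap
      map_add' := fun s t => by ext v; simp [add_smul]
      map_smul' := fun s t => by ext v; simp [mul_smul] }
  refine ⟨(indRel f V).liftQ (TensorProduct.AlgebraTensorModule.lift g') ?_, fun v => ?_⟩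
  · rw [indRel, Submodule.span_le]
    rintro x ⟨s, b, v, rfl⟩
    have h1 : (TensorProduct.AlgebraTensorModule.lift g') ((s * f b) ⊗ₜ[ℤ] v)
        = (s * f b) • g v := rfl
    have h2 : (TensorProduct.AlgebraTensorModule.lift g') (s ⊗ₜ[ℤ] (b • v))
        = s • g (b • v) := rfl
    rw [SetLike.mem_coe, LinearMap.mem_ker, map_sub, h1, h2, hg, mul_smul, sub_self]
  · exact one_smul S (g v)

end Induction

end Clifford

universe u

/-- **Statement 18.** (General Clifford correspondence.)  Let `A` and `B` be
finite-dimensional semisimple algebras over an algebraically closed field `k`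
with `B` normal in `A`, `V` a finite-dimensional simple `B`-module, and
`E = End_A(V↑^A)ᵒᵖ`.  There is a one-to-one correspondence between isomorphism
classes of finite-dimensional simple `E`-modules and isomorphism classes of
finite-dimensional simple `A`-modules containing a copy of `V` on restriction to
`B`, induced by `U ↦ V↑^A ⊗_E U` with inverse induced by `N ↦ Hom_A(V↑^A, N)`:
each functor maps one class into the other, the canonical unit and counit maps
`ψ : U → Hom_A(M, M ⊗_E U)` and `φ : M ⊗_E Hom_A(M,N) → N` are isomorphisms,
and the correspondence reflects isomorphism. -/
theorem stmt_18 (k : Type*) [Field k] [IsAlgClosed k]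
    (A : Type*) [Ring A] [Algebra k A] (B : Subalgebra k A)
    (V : Type*) [AddCommGroup V] [Module k V] [Module ↥B V] [IsScalarTower k ↥B V]
    [FiniteDimensional k V] [IsSimpleModule ↥B V]
    [FiniteDimensional k A] [IsSemisimpleRing A] [IsSemisimpleRing ↥B]
    (hnormal : ∀ I : TwoSidedIdeal A,
      AddSubgroup.closure ((Set.univ : Set A) * ((I : Set A) ∩ (B : Set A)))
        = AddSubgroup.closure (((I : Set A) ∩ (B : Set A)) * (Set.univ : Set A))) :
    (∀ (U : Type u) [AddCommGroup U]
        [Module (Module.End A (Ind B.val.toRingHom V))ᵐᵒᵖ U] [Module k U]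
        [FiniteDimensional k U]
        [IsSimpleModule (Module.End A (Ind B.val.toRingHom V))ᵐᵒᵖ U],
      (∀ (c : k) (e : (Module.End A (Ind B.val.toRingHom V))ᵐᵒᵖ) (u : U),
          (c • e) • u = c • (e • u)) →
        (IsSimpleModule A
            (BalT (Module.End A (Ind B.val.toRingHom V)) A (Ind B.val.toRingHom V) U) ∧
          FiniteDimensional k
            (BalT (Module.End A (Ind B.val.toRingHom V)) A (Ind B.val.toRingHom V) U) ∧
          (∃ g : V →ₗ[↥B]
              (BalT (Module.End A (Ind B.val.toRingHom V)) A (Ind B.val.toRingHom V) U),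
            Function.Injective g) ∧
          Function.Bijective (psiMap A (Ind B.val.toRingHom V) U))) ∧
    (∀ (N : Type u) [AddCommGroup N] [Module A N] [Module k N] [IsScalarTower k A N]
        [FiniteDimensional k N] [IsSimpleModule A N],
      (∃ g : V →ₗ[↥B] N, Function.Injective g) →
        (IsSimpleModule (Module.End A (Ind B.val.toRingHom V))ᵐᵒᵖ
            ((Ind B.val.toRingHom V) →ₗ[A] N) ∧
          Function.Bijective (phiMap A (Ind B.val.toRingHom V) N))) ∧
    (∀ (U₁ U₂ : Type u) [AddCommGroup U₁] [AddCommGroup U₂]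
        [Module (Module.End A (Ind B.val.toRingHom V))ᵐᵒᵖ U₁]
        [Module (Module.End A (Ind B.val.toRingHom V))ᵐᵒᵖ U₂]
        [IsSimpleModule (Module.End A (Ind B.val.toRingHom V))ᵐᵒᵖ U₁]
        [IsSimpleModule (Module.End A (Ind B.val.toRingHom V))ᵐᵒᵖ U₂],
      Nonempty
          ((BalT (Module.End A (Ind B.val.toRingHom V)) A (Ind B.val.toRingHom V) U₁)
            ≃ₗ[A]
           (BalT (Module.End A (Ind B.val.toRingHom V)) A (Ind B.val.toRingHom V) U₂)) →
        Nonempty (U₁ ≃ₗ[(Module.End A (Ind B.val.toRingHom V))ᵐᵒᵖ] U₂)) := by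
  have hfin : Module.Finite A (Ind B.val.toRingHom V) := Ind.finite_of_isSimpleModule _ _
  have hproj : Module.Projective A (Ind B.val.toRingHom V) :=
    Module.projective_of_isSemisimpleRing _ _
  have hfink : FiniteDimensional k (Ind B.val.toRingHom V) := Module.Finite.trans A _
  refine ⟨?_, ?_, ?_⟩
  · intro U _ _ _ _ _ _
    have hψ := psiMap_bijective (A := A) (M := Ind B.val.toRingHom V) U
    have hsimp := isSimpleModule_balT (A := A) (M := Ind B.val.toRingHom V) U
    have hU := IsSimpleModule.nontrivial (Module.End A (Ind B.val.toRingHom V))ᵐᵒᵖ U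
    obtain ⟨u, hu⟩ := exists_ne (0 : U)
    -- for `u ≠ 0`, the map `m ↦ m ⊗ u` is nonzero, hence onto the simple module `M ⊗_E U`
    have hne : psiMap A (Ind B.val.toRingHom V) U u ≠ 0 := fun h0 =>
      hu (hψ.1 (h0.trans (map_zero (psiLin A (Ind B.val.toRingHom V) U)).symm))
    have hsurj := LinearMap.surjective_of_ne_zero hne
    refine ⟨hsimp, ?_, ?_, hψ⟩
    · exact Module.Finite.of_surjective
        ((psiMap A (Ind B.val.toRingHom V) U u).restrictScalars k) hsurj
    · let g : V →ₗ[↥B] BalT (Module.End A (Ind B.val.toRingHom V)) A (Ind B.val.toRingHom V) U :=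
        { toFun := fun v => psiMap A (Ind B.val.toRingHom V) U u (Ind.of _ _ v)
          map_add' := fun v w => by rw [Ind.of_add, map_add]
          map_smul' := fun b v => by rw [Ind.of_smul, map_smul]; rfl }
      refine ⟨g, LinearMap.injective_of_ne_zero fun hg => hne ?_⟩
      refine LinearMap.ext_on_range (Ind.span_range_of B.val.toRingHom V) fun v => ?_
      exact LinearMap.congr_fun hg v
  · rintro N _ _ _ _ _ _ ⟨g, hg⟩
    have : Module.Projective A N := Module.projective_of_isSemisimpleRing _ _
    have hV := IsSimpleModule.nontrivial ↥B V
    obtain ⟨h, hh⟩ := Ind.exists_lift B.val.toRingHom V g.toAddMonoidHom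
      (fun b v => g.map_smul b v)
    have hne : ∃ f : Ind B.val.toRingHom V →ₗ[A] N, f ≠ 0 := by
      obtain ⟨v, hv⟩ := exists_ne (0 : V)
      refine ⟨h, fun h0 => hv (hg ?_)⟩
      rw [map_zero]
      exact (hh v).symm.trans (by rw [h0]; rfl)
    exact ⟨isSimpleModule_hom N hne, phiMap_bijective N hne⟩
  · rintro U₁ U₂ _ _ _ _ _ _ ⟨i⟩
    exact nonempty_equiv_of_balT U₁ U₂ i
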